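/- Weighted L¹ bound for the Z-norm (Lemma 3.2(i), estimate (pi11)): For every h ∈ L²(I_δ), one has ‖h‖_Z ≲ ∫_{I_{√ε/8}} |h(β)| · ε²/(ε³ + |β|³) dβ. -/

import Mathlib

noncomputable section
open Set MeasureTheory Filter Real

/-- The principal value at `α` of the integral `∫_ℝ F(β) dβ`, understood as the limit of the
integrals over `{β : r < |α − β|}` as `r → 0⁺`. -/
def pvI (F : ℝ → ℝ) (α : ℝ) : ℝ :=
  limUnder (nhdsWithin (0:ℝ) (Ioi 0)) (fun r => ∫ β in {β : ℝ | r < |α - β|}, F β)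

/-- `ψ` is a smooth even cutoff, with values in `[0,1]`, supported in `[−1,1]`,
equal to `1` on `[−1/2,1/2]`. -/
def IsCutoff (ψ : ℝ → ℝ) : Prop :=
  ContDiff ℝ (⊤ : ℕ∞) ψ ∧ (∀ x : ℝ, ψ (-x) = ψ x) ∧ (∀ x : ℝ, ψ x ∈ Icc (0:ℝ) 1) ∧
    (∀ x : ℝ, 1 < |x| → ψ x = 0) ∧ (∀ x : ℝ, |x| ≤ 1/2 → ψ x = 1)

/-- The rescaled cutoff `ψ_r(x) = ψ(x/r)`. -/
def scut (ψ : ℝ → ℝ) (r x : ℝ) : ℝ := ψ (x / r)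

/-- `X̃(α) = 2ε + f(α) + g(α)`. -/
def Xt (ε : ℝ) (f g : ℝ → ℝ) (α : ℝ) : ℝ := 2 * ε + f α + g α

/-- The operator `T_{1,f}`. -/
def T1 (ψ : ℝ → ℝ) (ε : ℝ) (f : ℝ → ℝ) (h : ℝ → ℝ) (α : ℝ) : ℝ :=
  (2 * π)⁻¹ * pvI (fun β =>
    (f α - f β) / ((α - β) ^ 2 + (f α - f β) ^ 2) * h β * scut ψ (Real.sqrt ε) (α - β)) α

/-- The operator `T_{2,f}`. -/
def T2 (ψ : ℝ → ℝ) (ε : ℝ) (f : ℝ → ℝ) (h : ℝ → ℝ) (α : ℝ) : ℝ :=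
  (2 * π)⁻¹ * pvI (fun β =>
    (α - β) / ((α - β) ^ 2 + (f α - f β) ^ 2) * h β * scut ψ (Real.sqrt ε) (α - β)) α

/-- The operator `T_{3,(f,g)}`. -/
def T3 (ψ : ℝ → ℝ) (ε : ℝ) (f g : ℝ → ℝ) (h : ℝ → ℝ) (α : ℝ) : ℝ :=
  (2 * π)⁻¹ * ∫ β : ℝ,
    (2 * ε + f α + g β) / ((α - β) ^ 2 + (2 * ε + f α + g β) ^ 2) * h β *
      scut ψ (Real.sqrt ε) (α - β)

/-- The operator `T_{4,(f,g)}`. -/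
def T4 (ψ : ℝ → ℝ) (ε : ℝ) (f g : ℝ → ℝ) (h : ℝ → ℝ) (α : ℝ) : ℝ :=
  (2 * π)⁻¹ * ∫ β : ℝ,
    (α - β) / ((α - β) ^ 2 + (2 * ε + f α + g β) ^ 2) * h β * scut ψ (Real.sqrt ε) (α - β)

/-- The kernel of the operator `H`. -/
def Hker (ψ : ℝ → ℝ) (ε : ℝ) (f g : ℝ → ℝ) (α β : ℝ) : ℝ :=
  (α - β)⁻¹ * ((Xt ε f g α) ^ 2 / ((α - β) ^ 2 + (Xt ε f g α) ^ 2)) *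
    scut ψ (Real.sqrt ε / 2 ^ 6) α * scut ψ (Real.sqrt ε / 2 ^ 6) (α - β)

/-- The kernel of the operator `M`. -/
def Mker (ψ : ℝ → ℝ) (ε : ℝ) (f g : ℝ → ℝ) (α β : ℝ) : ℝ :=
  (Xt ε f g α) / ((α - β) ^ 2 + (Xt ε f g α) ^ 2) *
    scut ψ (Real.sqrt ε / 2 ^ 6) α * scut ψ (Real.sqrt ε / 2 ^ 6) (α - β)

/-- The operator `H` (a principal value integral in the second variable of the kernel). -/
def Hop (ψ : ℝ → ℝ) (ε : ℝ) (f g : ℝ → ℝ) (h : ℝ → ℝ) (α : ℝ) : ℝ :=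
  (2 * π)⁻¹ * pvI (fun β => Hker ψ ε f g α β * h β) α

/-- The adjoint operator `H*` (integration of the kernel of `H` in its first variable). -/
def Hstar (ψ : ℝ → ℝ) (ε : ℝ) (f g : ℝ → ℝ) (φ : ℝ → ℝ) (β : ℝ) : ℝ :=
  (2 * π)⁻¹ * pvI (fun α => Hker ψ ε f g α β * φ α) β

/-- The operator `M`. -/
def Mop (ψ : ℝ → ℝ) (ε : ℝ) (f g : ℝ → ℝ) (h : ℝ → ℝ) (α : ℝ) : ℝ :=
  (2 * π)⁻¹ * ∫ β : ℝ, Mker ψ ε f g α β * h β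

/-- The adjoint operator `M*` (integration of the kernel of `M` in its first variable). -/
def Mstar (ψ : ℝ → ℝ) (ε : ℝ) (f g : ℝ → ℝ) (φ : ℝ → ℝ) (β : ℝ) : ℝ :=
  (2 * π)⁻¹ * ∫ α : ℝ, Mker ψ ε f g α β * φ α

/-- The class `C₂` of test functions: `C¹` functions compactly supported in `I_δ = (−δ,δ)` with
`|φ⁽ᵏ⁾(α)| ≤ ε/(ε^{2+k} + |α|^{2+k})` on `I_δ` for `k ∈ {0,1}`. -/
def InC2 (δ ε : ℝ) (φ : ℝ → ℝ) : Prop :=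
  ContDiff ℝ 1 φ ∧ HasCompactSupport φ ∧ tsupport φ ⊆ Ioo (-δ) δ ∧
    ∀ α ∈ Ioo (-δ) δ,
      |φ α| ≤ ε / (ε ^ 2 + |α| ^ 2) ∧ |deriv φ α| ≤ ε / (ε ^ 3 + |α| ^ 3)

/-- The standing hypotheses on `f, g : (−δ,δ) → ℝ`: they are `C⁵`, with
`‖f‖_{C³} + ‖g‖_{C³} ≤ A`, `f(0) = f'(0) = g(0) = g'(0) = 0`, and
`f(α) + g(β) ≥ −ε` for `α, β ∈ (−4√ε, 4√ε)`. -/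
def GoodFG (δ A ε : ℝ) (f g : ℝ → ℝ) : Prop :=
  ContDiffOn ℝ 5 f (Ioo (-δ) δ) ∧ ContDiffOn ℝ 5 g (Ioo (-δ) δ) ∧
    f 0 = 0 ∧ g 0 = 0 ∧
    derivWithin f (Ioo (-δ) δ) 0 = 0 ∧ derivWithin g (Ioo (-δ) δ) 0 = 0 ∧
    (∀ x ∈ Ioo (-δ) δ, ∀ i : ℕ, i ≤ 3 →
      |iteratedDerivWithin i f (Ioo (-δ) δ) x| + |iteratedDerivWithin i g (Ioo (-δ) δ) x| ≤ A) ∧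
    (∀ α ∈ Ioo (-(4 * Real.sqrt ε)) (4 * Real.sqrt ε),
      ∀ β ∈ Ioo (-(4 * Real.sqrt ε)) (4 * Real.sqrt ε), -ε ≤ f α + g β)

/-! Pairing `β + t` with `β - t` turns the principal value into an absolutely convergent integral
over `t > 0`. At distances `t` below half of `ρ = max |β| ε` the cancellation gains a factor `t`
from the regularity of the gap width, of the cutoff and of the test function at scale `ρ`; at larger
distances the damping `X² / (t² + X²)` makes the kernel of size `ε² / ρ³`. In both regimes what
remains is `ε² / ρ³` times a Poisson kernel, whose integral does not depend on `ε`. -/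

/-! ### Principal values -/

section PrincipalValue

variable {F D : ℝ → ℝ} {β r : ℝ}

lemma setOf_lt_abs_sub_eq : {α : ℝ | r < |β - α|} = Iio (β - r) ∪ Ioi (β + r) := by
  ext α
  simp only [mem_ofPred_eq, mem_union, mem_Iio, mem_Ioi, lt_abs]
  constructor <;> rintro (h | h) <;> first | (left; linarith) | (right; linarith)

lemma integrableOn_comp_add_comp_sub_Ioi (hF : IntegrableOn F {α | r < |β - α|}) :
    IntegrableOn (fun t => F (β + t)) (Ioi r) ∧ IntegrableOn (fun t => F (β - t)) (Ioi r) := by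
  rw [setOf_lt_abs_sub_eq, integrableOn_union] at hF
  constructor
  · have := ((measurePreserving_add_left volume β).integrableOn_comp_preimage
      (measurableEmbedding_addLeft β)).2 hF.2
    simpa [Function.comp_def] using this
  · have := ((Measure.measurePreserving_sub_left volume β).integrableOn_comp_preimage
      (measurableEmbedding_subLeft β)).2 hF.1
    simpa [Function.comp_def] using this

lemma setIntegral_lt_abs_sub_eq (hr : 0 ≤ r) (hF : IntegrableOn F {α | r < |β - α|}) :
    ∫ α in {α | r < |β - α|}, F α = ∫ t in Ioi r, (F (β + t) + F (β - t)) := by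
  obtain ⟨hadd, hsub⟩ := integrableOn_comp_add_comp_sub_Ioi hF
  have hright : ∫ t in Ioi r, F (β + t) = ∫ α in Ioi (β + r), F α := by
    simpa using (measurePreserving_add_left volume β).setIntegral_preimage_emb
      (measurableEmbedding_addLeft β) F (Ioi (β + r))
  have hleft : ∫ t in Ioi r, F (β - t) = ∫ α in Iio (β - r), F α := by
    simpa using (Measure.measurePreserving_sub_left volume β).setIntegral_preimage_emb
      (measurableEmbedding_subLeft β) F (Iio (β - r))
  have hdisj : Disjoint (Iio (β - r)) (Ioi (β + r)) :=
    Set.disjoint_left.2 fun α h₁ h₂ => by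
      simp only [mem_Iio, mem_Ioi] at h₁ h₂
      linarith
  rw [setOf_lt_abs_sub_eq, integrableOn_union] at hF
  rw [setOf_lt_abs_sub_eq, setIntegral_union hdisj measurableSet_Ioi hF.1 hF.2,
    integral_add hadd hsub, hright, hleft, add_comm]

lemma pvI_eq_integral_Ioi (hF : ∀ r > 0, IntegrableOn F {α | r < |β - α|})
    (hS : IntegrableOn (fun t => F (β + t) + F (β - t)) (Ioi 0)) :
    pvI F β = ∫ t in Ioi 0, (F (β + t) + F (β - t)) := by
  have hcover : AECover (volume.restrict (Ioi (0 : ℝ))) (nhdsWithin 0 (Ioi 0)) fun r : ℝ => Ioi r :=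
    aecover_Ioi_of_Ioi (tendsto_id'.2 nhdsWithin_le_nhds)
  refine Tendsto.limUnder_eq
    ((hcover.integral_tendsto_of_countably_generated hS).congr' ?_)
  filter_upwards [self_mem_nhdsWithin] with r hr
  rw [Measure.restrict_restrict measurableSet_Ioi,
    inter_eq_left.2 (Ioi_subset_Ioi (le_of_lt hr)),
    setIntegral_lt_abs_sub_eq (le_of_lt hr) (hF r hr)]

lemma aestronglyMeasurable_Ioi_of_integrableOn {G : ℝ → ℝ}
    (hG : ∀ r > 0, IntegrableOn G (Ioi r)) :
    AEStronglyMeasurable G (volume.restrict (Ioi 0)) := by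
  have hcover :
      AECover (volume.restrict (Ioi (0 : ℝ))) atTop fun n : ℕ => Ioi (1 / ((n : ℝ) + 1)) :=
    aecover_Ioi_of_Ioi tendsto_one_div_add_atTop_nhds_zero_nat
  refine hcover.aestronglyMeasurable fun n => ?_
  have hn : (0 : ℝ) < 1 / ((n : ℝ) + 1) := by positivity
  rw [Measure.restrict_restrict measurableSet_Ioi, inter_eq_left.2 (Ioi_subset_Ioi hn.le)]
  exact (hG _ hn).aestronglyMeasurable

lemma abs_pvI_le (hF : ∀ r > 0, IntegrableOn F {α | r < |β - α|}) (hD : IntegrableOn D (Ioi 0))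
    (hFD : ∀ t > 0, |F (β + t) + F (β - t)| ≤ D t) : |pvI F β| ≤ ∫ t in Ioi 0, D t := by
  have hbound : ∀ᵐ t ∂volume.restrict (Ioi 0), ‖F (β + t) + F (β - t)‖ ≤ D t :=
    (ae_restrict_mem measurableSet_Ioi).mono hFD
  have hmeas := aestronglyMeasurable_Ioi_of_integrableOn fun r hr =>
    (integrableOn_comp_add_comp_sub_Ioi (hF r hr)).1.add
      (integrableOn_comp_add_comp_sub_Ioi (hF r hr)).2
  rw [pvI_eq_integral_Ioi hF (hD.mono' hmeas hbound), ← Real.norm_eq_abs]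
  exact norm_integral_le_of_norm_le hD hbound

lemma pvI_zero : pvI (fun _ => 0) β = 0 := by
  rw [pvI_eq_integral_Ioi (fun _ _ => integrableOn_zero) (by simp)]
  simp

end PrincipalValue

/-! ### The Poisson kernel and the damping factor -/

/-- The Poisson kernel `ε / (ε² + x²)` of the upper half-plane at height `ε`, normalized to have
integral `π`: the profile of the test functions in `C₂`. -/
def poisson (ε x : ℝ) : ℝ := ε / (ε ^ 2 + x ^ 2)

/-- The factor `X² / (t² + X²)` by which `H` damps the Hilbert kernel at distance `t` when the gap
has width `X`. -/
def damping (X t : ℝ) : ℝ := X ^ 2 / (t ^ 2 + X ^ 2)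

section Kernels

variable {ε B X Y t : ℝ}

lemma poisson_nonneg (hε : 0 ≤ ε) (x : ℝ) : 0 ≤ poisson ε x := by
  unfold poisson
  positivity

lemma poisson_eq_cauchyPDFReal (hε : 0 < ε) :
    poisson ε = fun x => π * ProbabilityTheory.cauchyPDFReal 0 ⟨ε, hε.le⟩ x := by
  funext x
  change ε / (ε ^ 2 + x ^ 2) = π * (π⁻¹ * ε * ((x - 0) ^ 2 + ε ^ 2)⁻¹)
  field_simp
  ring

lemma integrable_poisson (hε : 0 < ε) : Integrable (poisson ε) := by
  rw [poisson_eq_cauchyPDFReal hε]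
  exact (ProbabilityTheory.integrable_cauchyPDFReal 0).const_mul π

lemma integral_poisson (hε : 0 < ε) : ∫ x, poisson ε x = π := by
  have hne : (⟨ε, hε.le⟩ : NNReal) ≠ 0 := fun h => hε.ne' (congrArg NNReal.toReal h)
  rw [poisson_eq_cauchyPDFReal hε, integral_const_mul,
    ProbabilityTheory.integral_cauchyPDFReal_eq_one 0 hne, mul_one]

lemma integral_Ioi_three_poisson_le (hε : 0 < ε) (β : ℝ) :
    IntegrableOn (fun t => poisson ε t + poisson ε (β + t) + poisson ε (β - t)) (Ioi 0) ∧
      ∫ t in Ioi 0, (poisson ε t + poisson ε (β + t) + poisson ε (β - t)) ≤ 3 * π := by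
  have hcenter := integrable_poisson hε
  have hright := hcenter.comp_add_left β
  have hleft := hcenter.comp_sub_left β
  have htwo : Integrable fun t => poisson ε t + poisson ε (β + t) := hcenter.add hright
  have hthree : Integrable fun t => poisson ε t + poisson ε (β + t) + poisson ε (β - t) :=
    htwo.add hleft
  refine ⟨hthree.integrableOn,
    (setIntegral_le_integral hthree (.of_forall fun t => ?_)).trans_eq ?_⟩
  · have := poisson_nonneg hε.le
    exact add_nonneg (add_nonneg (this _) (this _)) (this _)
  · rw [integral_add htwo hleft, integral_add hcenter hright,
      integral_add_left_eq_self (poisson ε) β, integral_sub_left_eq_self (poisson ε) volume β,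
      integral_poisson hε]
    ring

lemma damping_nonneg (X t : ℝ) : 0 ≤ damping X t := by
  unfold damping
  positivity

lemma damping_le_sq_div_sq (ht : t ≠ 0) (hX : 0 ≤ X) (hXB : X ≤ B) :
    damping X t ≤ B ^ 2 / t ^ 2 := by
  unfold damping
  gcongr
  nlinarith [sq_nonneg X]

lemma damping_le_mul_poisson (hε : 0 < ε) (hB : 1 ≤ B) (hεX : ε ≤ X) (hXB : X ≤ B * ε) :
    damping X t ≤ B ^ 2 * ε * poisson ε t := by
  have hX : 0 < X := hε.trans_le hεX
  have hXsq : X ^ 2 ≤ B ^ 2 * ε ^ 2 := by rw [← mul_pow]; gcongr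
  have hBsq : (1 : ℝ) ≤ B ^ 2 := one_le_pow₀ hB
  rw [damping, poisson, mul_div_assoc', div_le_div_iff₀ (by positivity) (by positivity)]
  nlinarith [mul_le_mul_of_nonneg_right hXsq (sq_nonneg t),
    mul_le_mul_of_nonneg_right hBsq (by positivity : 0 ≤ ε ^ 2 * X ^ 2)]

lemma abs_damping_sub_le (hε : 0 < ε) (hεX : ε ≤ X) (hXB : X ≤ B * ε) (hεY : ε ≤ Y)
    (hYB : Y ≤ B * ε) :
    |damping X t - damping Y t| ≤ |X - Y| * (2 * B * poisson ε t) := by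
  have hX : 0 < X := hε.trans_le hεX
  have hY : 0 < Y := hε.trans_le hεY
  have hfactor : damping X t - damping Y t
      = (X - Y) * ((t ^ 2 / (t ^ 2 + X ^ 2)) * ((X + Y) / (t ^ 2 + Y ^ 2))) := by
    unfold damping
    field_simp
    ring
  have hfirst : t ^ 2 / (t ^ 2 + X ^ 2) ≤ 1 :=
    div_le_one_of_le₀ (by nlinarith) (by positivity)
  have hsecond : (X + Y) / (t ^ 2 + Y ^ 2) ≤ 2 * B * poisson ε t := by
    rw [poisson, mul_div_assoc']
    have : ε ^ 2 ≤ Y ^ 2 := by gcongr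
    exact div_le_div₀ (by linarith) (by linarith) (by positivity) (by linarith)
  rw [hfactor, abs_mul, abs_of_nonneg (a := _ / _ * _) (by positivity)]
  exact mul_le_mul_of_nonneg_left
    ((mul_le_of_le_one_left (by positivity) hfirst).trans hsecond) (abs_nonneg _)

end Kernels

lemma abs_mul_sub_mul_le (a b c d : ℝ) : |a * b - c * d| ≤ |a| * |b - d| + |a - c| * |d| := by
  rw [← abs_mul, ← abs_mul, show a * b - c * d = a * (b - d) + (a - c) * d by ring]
  exact abs_add_le _ _

/-! ### The scale of a point -/

/-- The distance scale `max |β| ε` at which functions in `C₂` vary near `β`. -/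
def scale (ε β : ℝ) : ℝ := max |β| ε

section Scale

variable {ε β x : ℝ}

lemma scale_pos (hε : 0 < ε) : 0 < scale ε β := lt_max_of_lt_right hε

lemma scale_pow_le (hε : 0 ≤ ε) (k : ℕ) : scale ε x ^ k ≤ ε ^ k + |x| ^ k := by
  have hεk : 0 ≤ ε ^ k := by positivity
  have hxk : 0 ≤ |x| ^ k := by positivity
  rcases max_cases |x| ε with ⟨h, -⟩ | ⟨h, -⟩ <;> rw [scale, h] <;> linarith

lemma pow_add_pow_le_two_mul_scale_pow (hε : 0 ≤ ε) (k : ℕ) :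
    ε ^ k + |x| ^ k ≤ 2 * scale ε x ^ k := by
  have hεk : ε ^ k ≤ scale ε x ^ k := by gcongr; exact le_max_right _ _
  have hxk : |x| ^ k ≤ scale ε x ^ k := by gcongr; exact le_max_left _ _
  linarith

lemma half_scale_le_scale_of_mem (hε : 0 ≤ ε) (hx : x ∈ Metric.closedBall β (scale ε β / 2)) :
    scale ε β / 2 ≤ scale ε x := by
  have hdist : |β - x| ≤ scale ε β / 2 := by rwa [abs_sub_comm]
  have htri := abs_sub_abs_le_abs_sub β x
  unfold scale at *
  rcases max_cases |β| ε with ⟨h, -⟩ | ⟨h, -⟩ <;> rw [h] at hdist ⊢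
  · exact le_max_of_le_left (by linarith)
  · exact le_max_of_le_right (by linarith)

lemma abs_le_of_mem_closedBall_scale (hx : x ∈ Metric.closedBall β (scale ε β / 2)) :
    |x| ≤ 3 / 2 * scale ε β := by
  have hdist : |x - β| ≤ scale ε β / 2 := hx
  have htri := abs_sub_abs_le_abs_sub x β
  have hβ : |β| ≤ scale ε β := le_max_left _ _
  linarith

lemma div_pow_add_pow_le_of_mem (hε : 0 < ε) (hx : x ∈ Metric.closedBall β (scale ε β / 2))
    (k : ℕ) : ε / (ε ^ k + |x| ^ k) ≤ 2 ^ k * (ε / scale ε β ^ k) := by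
  have hβ := scale_pos (β := β) hε
  calc ε / (ε ^ k + |x| ^ k) ≤ ε / (scale ε β / 2) ^ k := by
        gcongr
        exact (pow_le_pow_left₀ (by positivity) (half_scale_le_scale_of_mem hε.le hx) k).trans
          (scale_pow_le hε.le k)
    _ = 2 ^ k * (ε / scale ε β ^ k) := by rw [div_pow]; field_simp

lemma scale_le_sqrt_div_eight (hε : ε ∈ Ioc 0 (1 / 64)) (hβ : |β| ≤ √ε / 8) :
    scale ε β ≤ √ε / 8 := by
  have hsqrt : √ε ≤ 1 / 8 := by
    rw [Real.sqrt_le_left (by norm_num)]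
    exact hε.2.trans_eq (by norm_num)
  refine max_le hβ ?_
  nlinarith [Real.sq_sqrt hε.1.le, Real.sqrt_nonneg ε]

end Scale

/-! ### Cutoffs, test functions and gap widths -/

/-- The properties of the cutoff `ψ` that the estimate uses; smoothness enters only through a
Lipschitz constant. -/
structure IsLipschitzCutoff (L : NNReal) (ψ : ℝ → ℝ) : Prop where
  lipschitzWith : LipschitzWith L ψ
  even : ∀ x, ψ (-x) = ψ x
  abs_le_one : ∀ x, |ψ x| ≤ 1
  eq_zero : ∀ x, 1 < |x| → ψ x = 0

/-- A test function with the bounds of `C₂`, required only on `|x| < √ε / 4`. -/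
structure IsTestFunction (ε : ℝ) (φ : ℝ → ℝ) : Prop where
  differentiableAt : ∀ x, |x| < √ε / 4 → DifferentiableAt ℝ φ x
  abs_le : ∀ x, |x| < √ε / 4 → |φ x| ≤ ε / (ε ^ 2 + |x| ^ 2)
  abs_deriv_le : ∀ x, |x| < √ε / 4 → |deriv φ x| ≤ ε / (ε ^ 3 + |x| ^ 3)

/-- The width `X` of the gap between two almost touching curves, such as `X = 2ε + f + g`. It is
bounded below by `ε`, equals `2ε` at the origin, and has slope `O(|x|)` on `|x| < √ε / 4`. -/
structure IsGapWidth (A ε : ℝ) (X : ℝ → ℝ) : Prop where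
  at_zero : X 0 = 2 * ε
  le : ∀ x, |x| < √ε / 4 → ε ≤ X x
  differentiableAt : ∀ x, |x| < √ε / 4 → DifferentiableAt ℝ X x
  abs_deriv_le : ∀ x, |x| < √ε / 4 → |deriv X x| ≤ A * |x|

section Regularity

variable {A ε β a b : ℝ} {L : NNReal} {ψ φ X : ℝ → ℝ}

lemma IsLipschitzCutoff.scut_eq_zero (hψ : IsLipschitzCutoff L ψ) {r x : ℝ} (hr : 0 < r)
    (hx : r < |x|) : scut ψ r x = 0 :=
  hψ.eq_zero _ (by rwa [abs_div, abs_of_pos hr, one_lt_div hr])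

lemma IsLipschitzCutoff.abs_scut_sub_le (hψ : IsLipschitzCutoff L ψ) {r : ℝ} (hr : 0 < r)
    (x y : ℝ) : |scut ψ r x - scut ψ r y| ≤ L / r * |x - y| := by
  have := hψ.lipschitzWith.dist_le_mul (x / r) (y / r)
  rw [Real.dist_eq, Real.dist_eq, ← sub_div, abs_div, abs_of_pos hr] at this
  exact this.trans_eq (by ring)

lemma abs_lt_of_mem_closedBall_scale (hε : 0 < ε) (hβ : scale ε β ≤ √ε / 8)
    (ha : a ∈ Metric.closedBall β (scale ε β / 2)) : |a| < √ε / 4 := by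
  have := abs_le_of_mem_closedBall_scale ha
  have := Real.sqrt_pos.2 hε
  linarith

lemma IsTestFunction.abs_le_of_mem (hφ : IsTestFunction ε φ) (hε : 0 < ε)
    (hβ : scale ε β ≤ √ε / 8) (ha : a ∈ Metric.closedBall β (scale ε β / 2)) :
    |φ a| ≤ 4 * (ε / scale ε β ^ 2) :=
  ((hφ.abs_le a (abs_lt_of_mem_closedBall_scale hε hβ ha)).trans
    (div_pow_add_pow_le_of_mem hε ha 2)).trans_eq (by norm_num)

lemma IsTestFunction.abs_sub_le (hφ : IsTestFunction ε φ) (hε : 0 < ε)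
    (hβ : scale ε β ≤ √ε / 8) (ha : a ∈ Metric.closedBall β (scale ε β / 2))
    (hb : b ∈ Metric.closedBall β (scale ε β / 2)) :
    |φ a - φ b| ≤ 8 * (ε / scale ε β ^ 3) * |a - b| := by
  refine Convex.norm_image_sub_le_of_norm_deriv_le (𝕜 := ℝ)
    (fun x hx => hφ.differentiableAt x (abs_lt_of_mem_closedBall_scale hε hβ hx))
    (fun x hx => ?_) (convex_closedBall _ _) hb ha
  exact ((hφ.abs_deriv_le x (abs_lt_of_mem_closedBall_scale hε hβ hx)).trans
    (div_pow_add_pow_le_of_mem hε hx 3)).trans_eq (by norm_num)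

lemma IsTestFunction.abs_scut_mul_sub_le (hφ : IsTestFunction ε φ) (hψ : IsLipschitzCutoff L ψ)
    (hε : 0 < ε) (hβ : scale ε β ≤ √ε / 8) (ha : a ∈ Metric.closedBall β (scale ε β / 2))
    (hb : b ∈ Metric.closedBall β (scale ε β / 2)) :
    |scut ψ (√ε / 2 ^ 6) a * φ a - scut ψ (√ε / 2 ^ 6) b * φ b| ≤
      (8 + 32 * L) * (ε / scale ε β ^ 3) * |a - b| := by
  have hρ := scale_pos (β := β) hε
  have := Real.sqrt_pos.2 hε
  have hscut : |scut ψ (√ε / 2 ^ 6) a - scut ψ (√ε / 2 ^ 6) b| ≤ 8 * L / scale ε β * |a - b| := by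
    refine (hψ.abs_scut_sub_le (by positivity) a b).trans ?_
    gcongr ?_ * _
    calc L / (√ε / 2 ^ 6) = 8 * L / (√ε / 8) := by field_simp; norm_num
      _ ≤ 8 * L / scale ε β := by gcongr
  calc _ ≤ |scut ψ (√ε / 2 ^ 6) a| * |φ a - φ b|
        + |scut ψ (√ε / 2 ^ 6) a - scut ψ (√ε / 2 ^ 6) b| * |φ b| := abs_mul_sub_mul_le _ _ _ _
    _ ≤ 1 * (8 * (ε / scale ε β ^ 3) * |a - b|)
        + (8 * L / scale ε β * |a - b|) * (4 * (ε / scale ε β ^ 2)) := by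
      gcongr
      · exact hψ.abs_le_one _
      · exact hφ.abs_sub_le hε hβ ha hb
      · exact hφ.abs_le_of_mem hε hβ hb
    _ = (8 + 32 * L) * (ε / scale ε β ^ 3) * |a - b| := by field_simp; ring

lemma IsGapWidth.abs_sub_le (hX : IsGapWidth A ε X) (hA : 0 ≤ A) {m : ℝ} (hm : m < √ε / 4)
    (ha : |a| ≤ m) (hb : |b| ≤ m) : |X a - X b| ≤ A * m * |a - b| := by
  have hlt : ∀ x ∈ Icc (-m) m, |x| < √ε / 4 := fun x hx => (abs_le.2 hx).trans_lt hm
  refine Convex.norm_image_sub_le_of_norm_deriv_le (𝕜 := ℝ)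
    (fun x hx => hX.differentiableAt x (hlt x hx)) (fun x hx => ?_) (convex_Icc _ _)
    (abs_le.1 hb) (abs_le.1 ha)
  refine (hX.abs_deriv_le x (hlt x hx)).trans ?_
  gcongr
  exact abs_le.2 hx

lemma IsGapWidth.le_mul (hX : IsGapWidth A ε X) (hA : 0 ≤ A) (hε : 0 ≤ ε) (ha : |a| < √ε / 4) :
    X a ≤ (A + 2) * ε := by
  have hdiff := hX.abs_sub_le hA ha le_rfl (b := 0) (by simp)
  rw [hX.at_zero, sub_zero] at hdiff
  have hsq : |a| * |a| ≤ ε := by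
    nlinarith [Real.sq_sqrt hε, Real.sqrt_nonneg ε, abs_nonneg a]
  nlinarith [(abs_le.1 hdiff).2, mul_le_mul_of_nonneg_left hsq hA]

end Regularity

/-! ### The kernel of `H*` -/

section Kernel

variable {A ε β t : ℝ} {L : NNReal} {ψ f g φ : ℝ → ℝ}

lemma Hker_eq (ψ : ℝ → ℝ) (ε : ℝ) (f g : ℝ → ℝ) (α β : ℝ) :
    Hker ψ ε f g α β = (α - β)⁻¹ * damping (Xt ε f g α) (α - β) *
      scut ψ (√ε / 2 ^ 6) α * scut ψ (√ε / 2 ^ 6) (α - β) := rfl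

lemma Hker_eq_zero_of_lt_abs (hψ : IsLipschitzCutoff L ψ) (hε : 0 < ε) {α : ℝ}
    (hα : √ε / 2 ^ 6 < |α|) : Hker ψ ε f g α β = 0 := by
  have := Real.sqrt_pos.2 hε
  rw [Hker_eq, hψ.scut_eq_zero (by positivity) hα, mul_zero, zero_mul]

lemma Hker_eq_zero_of_lt_abs_sub (hψ : IsLipschitzCutoff L ψ) (hε : 0 < ε) {α : ℝ}
    (hα : √ε / 2 ^ 6 < |α - β|) : Hker ψ ε f g α β = 0 := by
  have := Real.sqrt_pos.2 hε
  rw [Hker_eq, hψ.scut_eq_zero (by positivity) hα, mul_zero]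

lemma Hstar_eq_zero (hψ : IsLipschitzCutoff L ψ) (hε : 0 < ε) (hβ : √ε / 8 ≤ |β|) :
    Hstar ψ ε f g φ β = 0 := by
  have hker : ∀ α, Hker ψ ε f g α β = 0 := fun α => by
    rcases lt_or_ge (√ε / 2 ^ 6) |α| with hα | hα
    · exact Hker_eq_zero_of_lt_abs hψ hε hα
    · refine Hker_eq_zero_of_lt_abs_sub hψ hε ?_
      have := abs_sub_abs_le_abs_sub β α
      rw [abs_sub_comm] at this
      linarith [Real.sqrt_pos.2 hε]
  simp only [Hstar, hker, zero_mul, pvI_zero, mul_zero]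

lemma abs_Hker_mul_le (hψ : IsLipschitzCutoff L ψ) (hX : IsGapWidth A ε (Xt ε f g))
    (hφ : IsTestFunction ε φ) (hA : 0 ≤ A) (hε : 0 < ε) {α : ℝ} (hα : α ≠ β) :
    |Hker ψ ε f g α β * φ α| ≤ ((A + 2) * ε) ^ 2 / |α - β| ^ 3 * poisson ε α := by
  have hne : α - β ≠ 0 := sub_ne_zero.2 hα
  have : 0 < |α - β| := abs_pos.2 hne
  rcases lt_or_ge (√ε / 2 ^ 6) |α| with hlarge | hsmall
  · rw [Hker_eq_zero_of_lt_abs hψ hε hlarge, zero_mul, abs_zero]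
    have := poisson_nonneg hε.le α
    positivity
  have hlt : |α| < √ε / 4 := by linarith [Real.sqrt_pos.2 hε]
  have hdamping : damping (Xt ε f g α) (α - β) ≤ ((A + 2) * ε) ^ 2 / |α - β| ^ 2 := by
    rw [sq_abs]
    exact damping_le_sq_div_sq hne (hε.le.trans (hX.le α hlt)) (hX.le_mul hA hε.le hlt)
  have hφα : |φ α| ≤ poisson ε α := by simpa only [poisson, sq_abs] using hφ.abs_le α hlt
  rw [Hker_eq]
  simp only [abs_mul, abs_inv, abs_of_nonneg (damping_nonneg _ _)]
  calc _ ≤ |α - β|⁻¹ * (((A + 2) * ε) ^ 2 / |α - β| ^ 2) * 1 * 1 * poisson ε α := by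
        gcongr
        · exact hψ.abs_le_one _
        · exact hψ.abs_le_one _
    _ = _ := by field_simp

lemma integrableOn_Hker_mul (hψ : IsLipschitzCutoff L ψ) (hX : IsGapWidth A ε (Xt ε f g))
    (hφ : IsTestFunction ε φ) (hε : 0 < ε) {r : ℝ} (hr : 0 < r) :
    IntegrableOn (fun α => Hker ψ ε f g α β * φ α) {α | r < |β - α|} := by
  have hsqrt := Real.sqrt_pos.2 hε
  set K : Set ℝ := Icc (-(√ε / 2 ^ 6)) (√ε / 2 ^ 6) ∩ {α | r ≤ |β - α|}
  have hK : IsCompact K :=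
    isCompact_Icc.inter_right (isClosed_le continuous_const (by fun_prop))
  have hlt : ∀ α ∈ K, |α| < √ε / 4 := fun α hα => by
    linarith [abs_le.2 hα.1]
  have hne : ∀ α ∈ K, α - β ≠ 0 := fun α hα h => by
    have : r ≤ |β - α| := hα.2
    rw [abs_sub_comm, h, abs_zero] at this
    linarith
  have hXc : ContinuousOn (Xt ε f g) K := fun α hα =>
    (hX.differentiableAt α (hlt α hα)).continuousAt.continuousWithinAt
  have hφc : ContinuousOn φ K := fun α hα =>
    (hφ.differentiableAt α (hlt α hα)).continuousAt.continuousWithinAt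
  have hψc : Continuous ψ := hψ.lipschitzWith.continuous
  have hden : ∀ α ∈ K, (α - β) ^ 2 + Xt ε f g α ^ 2 ≠ 0 := fun α hα => by
    have := hne α hα
    positivity
  have hcont : ContinuousOn (fun α => Hker ψ ε f g α β * φ α) K := by
    unfold Hker scut
    fun_prop (disch := assumption)
  refine IntegrableOn.of_forall_sdiff_eq_zero (hcont.integrableOn_compact hK)
    (measurableSet_lt measurable_const (by fun_prop)) fun α hα => ?_
  have hout : √ε / 2 ^ 6 < |α| := by
    by_contra! h
    have hr : r < |β - α| := hα.1
    exact hα.2 ⟨abs_le.1 h, hr.le⟩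
  rw [Hker_eq_zero_of_lt_abs hψ hε hout, zero_mul]

-- The odd factor `(α - β)⁻¹` of the kernel turns the sum over `β ± t` into a difference.
lemma Hker_mul_add_Hker_mul (hψ : IsLipschitzCutoff L ψ) (φ : ℝ → ℝ) :
    Hker ψ ε f g (β + t) β * φ (β + t) + Hker ψ ε f g (β - t) β * φ (β - t) =
      t⁻¹ * scut ψ (√ε / 2 ^ 6) t *
        (damping (Xt ε f g (β + t)) t * (scut ψ (√ε / 2 ^ 6) (β + t) * φ (β + t)) -
          damping (Xt ε f g (β - t)) t * (scut ψ (√ε / 2 ^ 6) (β - t) * φ (β - t))) := by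
  simp only [Hker_eq, damping, scut, add_sub_cancel_left, sub_sub_cancel_left, neg_div, hψ.even,
    neg_sq, inv_neg]
  ring

lemma abs_damping_mul_sub_le (hψ : IsLipschitzCutoff L ψ) {X : ℝ → ℝ} (hX : IsGapWidth A ε X)
    (hφ : IsTestFunction ε φ) (hA : 0 ≤ A) (hε : 0 < ε) (hβ : scale ε β ≤ √ε / 8) {a b : ℝ}
    (ha : a ∈ Metric.closedBall β (scale ε β / 2))
    (hb : b ∈ Metric.closedBall β (scale ε β / 2)) :
    |damping (X a) t * (scut ψ (√ε / 2 ^ 6) a * φ a) -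
        damping (X b) t * (scut ψ (√ε / 2 ^ 6) b * φ b)| ≤
      (20 + 32 * L) * (A + 2) ^ 2 * (ε ^ 2 / scale ε β ^ 3) * poisson ε t * |a - b| := by
  have hρ := scale_pos (β := β) hε
  have hP := poisson_nonneg hε.le t
  have hlta := abs_lt_of_mem_closedBall_scale hε hβ ha
  have hltb := abs_lt_of_mem_closedBall_scale hε hβ hb
  set ρ := scale ε β
  have hρε : ρ ^ 2 ≤ ε := by nlinarith [Real.sq_sqrt hε.le, Real.sqrt_nonneg ε]
  have hda : |damping (X a) t| ≤ (A + 2) ^ 2 * ε * poisson ε t := by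
    rw [abs_of_nonneg (damping_nonneg _ _)]
    exact damping_le_mul_poisson hε (by linarith) (hX.le a hlta) (hX.le_mul hA hε.le hlta)
  have hdab : |damping (X a) t - damping (X b) t| ≤
      A * (3 / 2 * ρ) * |a - b| * (2 * (A + 2) * poisson ε t) := by
    refine (abs_damping_sub_le hε (hX.le a hlta) (hX.le_mul hA hε.le hlta) (hX.le b hltb)
      (hX.le_mul hA hε.le hltb)).trans ?_
    gcongr
    exact hX.abs_sub_le hA (by linarith [Real.sqrt_pos.2 hε]) (abs_le_of_mem_closedBall_scale ha)
      (abs_le_of_mem_closedBall_scale hb)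
  have hub : |scut ψ (√ε / 2 ^ 6) b * φ b| ≤ 4 * (ε / ρ ^ 2) := by
    rw [abs_mul]
    exact (mul_le_of_le_one_left (abs_nonneg _) (hψ.abs_le_one _)).trans
      (hφ.abs_le_of_mem hε hβ hb)
  calc _ ≤ _ := abs_mul_sub_mul_le _ _ _ _
    _ ≤ (A + 2) ^ 2 * ε * poisson ε t * ((8 + 32 * L) * (ε / ρ ^ 3) * |a - b|)
        + A * (3 / 2 * ρ) * |a - b| * (2 * (A + 2) * poisson ε t) * (4 * (ε / ρ ^ 2)) := by
      gcongr
      exact hφ.abs_scut_mul_sub_le hψ hε hβ ha hb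
    _ = ((8 + 32 * L) * (A + 2) ^ 2 * ε ^ 2 + 12 * A * (A + 2) * (ε * ρ ^ 2)) / ρ ^ 3
        * poisson ε t * |a - b| := by field_simp; ring
    _ ≤ ((8 + 32 * L) * (A + 2) ^ 2 * ε ^ 2 + 12 * (A + 2) * (A + 2) * (ε * ε)) / ρ ^ 3
        * poisson ε t * |a - b| := by gcongr; linarith
    _ = _ := by ring

lemma abs_Hker_mul_add_Hker_mul_le_near (hψ : IsLipschitzCutoff L ψ)
    (hX : IsGapWidth A ε (Xt ε f g)) (hφ : IsTestFunction ε φ) (hA : 0 ≤ A) (hε : 0 < ε)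
    (hβ : scale ε β ≤ √ε / 8) (ht : 0 < t) (htβ : t ≤ scale ε β / 2) :
    |Hker ψ ε f g (β + t) β * φ (β + t) + Hker ψ ε f g (β - t) β * φ (β - t)| ≤
      (40 + 64 * L) * (A + 2) ^ 2 * (ε ^ 2 / scale ε β ^ 3) * poisson ε t := by
  have hright : β + t ∈ Metric.closedBall β (scale ε β / 2) := by
    simpa [Real.dist_eq, abs_of_pos ht] using htβ
  have hleft : β - t ∈ Metric.closedBall β (scale ε β / 2) := by
    simpa [Real.dist_eq, abs_of_pos ht] using htβ
  have hdist : |β + t - (β - t)| = 2 * t := by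
    rw [show β + t - (β - t) = 2 * t by ring, abs_of_pos (by positivity)]
  have hdiff := abs_damping_mul_sub_le (t := t) hψ hX hφ hA hε hβ hright hleft
  rw [hdist] at hdiff
  rw [Hker_mul_add_Hker_mul hψ, abs_mul, abs_mul, abs_of_pos (inv_pos.2 ht)]
  calc _ ≤ t⁻¹ * 1 * _ :=
        mul_le_mul (mul_le_mul_of_nonneg_left (hψ.abs_le_one _) (inv_pos.2 ht).le) hdiff
          (abs_nonneg _) (by positivity)
    _ = _ := by field_simp; ring

lemma abs_Hker_mul_add_Hker_mul_le_far (hψ : IsLipschitzCutoff L ψ)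
    (hX : IsGapWidth A ε (Xt ε f g)) (hφ : IsTestFunction ε φ) (hA : 0 ≤ A) (hε : 0 < ε)
    (htβ : scale ε β / 2 ≤ t) :
    |Hker ψ ε f g (β + t) β * φ (β + t) + Hker ψ ε f g (β - t) β * φ (β - t)| ≤
      8 * (A + 2) ^ 2 * (ε ^ 2 / scale ε β ^ 3) * (poisson ε (β + t) + poisson ε (β - t)) := by
  have hρ := scale_pos (β := β) hε
  have ht : 0 < t := by linarith
  have hright := abs_Hker_mul_le (β := β) hψ hX hφ hA hε (α := β + t) (by linarith)
  have hleft := abs_Hker_mul_le (β := β) hψ hX hφ hA hε (α := β - t) (by linarith)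
  simp only [add_sub_cancel_left, sub_sub_cancel_left, abs_neg, abs_of_pos ht] at hright hleft
  have hcube : ((A + 2) * ε) ^ 2 / t ^ 3 ≤ 8 * (A + 2) ^ 2 * (ε ^ 2 / scale ε β ^ 3) :=
    calc ((A + 2) * ε) ^ 2 / t ^ 3 ≤ ((A + 2) * ε) ^ 2 / (scale ε β / 2) ^ 3 := by gcongr
      _ = _ := by field_simp; norm_num
  calc _ ≤ _ := abs_add_le _ _
    _ ≤ _ := add_le_add hright hleft
    _ = ((A + 2) * ε) ^ 2 / t ^ 3 * (poisson ε (β + t) + poisson ε (β - t)) := by ring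
    _ ≤ _ := mul_le_mul_of_nonneg_right hcube
      (add_nonneg (poisson_nonneg hε.le _) (poisson_nonneg hε.le _))

lemma abs_Hker_mul_add_Hker_mul_le (hψ : IsLipschitzCutoff L ψ)
    (hX : IsGapWidth A ε (Xt ε f g)) (hφ : IsTestFunction ε φ) (hA : 0 ≤ A) (hε : 0 < ε)
    (hβ : scale ε β ≤ √ε / 8) (ht : 0 < t) :
    |Hker ψ ε f g (β + t) β * φ (β + t) + Hker ψ ε f g (β - t) β * φ (β - t)| ≤
      (40 + 64 * L) * (A + 2) ^ 2 * (ε ^ 2 / scale ε β ^ 3) *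
        (poisson ε t + poisson ε (β + t) + poisson ε (β - t)) := by
  have hρ := scale_pos (β := β) hε
  have hP := poisson_nonneg hε.le
  have hPβ : 0 ≤ poisson ε (β + t) + poisson ε (β - t) := add_nonneg (hP _) (hP _)
  rcases le_total t (scale ε β / 2) with hnear | hfar
  · refine (abs_Hker_mul_add_Hker_mul_le_near hψ hX hφ hA hε hβ ht hnear).trans ?_
    gcongr
    linarith
  · refine (abs_Hker_mul_add_Hker_mul_le_far hψ hX hφ hA hε hfar).trans ?_
    gcongr
    · linarith [L.coe_nonneg]
    · linarith [hP t]

theorem abs_Hstar_le (hψ : IsLipschitzCutoff L ψ) (hX : IsGapWidth A ε (Xt ε f g))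
    (hφ : IsTestFunction ε φ) (hA : 0 ≤ A) (hε : ε ∈ Ioc 0 (1 / 64)) (hβ : |β| ≤ √ε / 8) :
    |Hstar ψ ε f g φ β| ≤
      3 * ((40 + 64 * L) * (A + 2) ^ 2) * (ε ^ 2 / (ε ^ 3 + |β| ^ 3)) := by
  have hε₀ : 0 < ε := hε.1
  have hρ := scale_pos (β := β) hε₀
  set c := (40 + 64 * L) * (A + 2) ^ 2
  obtain ⟨hint, hle⟩ := integral_Ioi_three_poisson_le hε₀ β
  have hpv : |pvI (fun α => Hker ψ ε f g α β * φ α) β| ≤ c * (ε ^ 2 / scale ε β ^ 3) * (3 * π) := by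
    refine (abs_pvI_le (fun r hr => integrableOn_Hker_mul hψ hX hφ hε₀ hr) (hint.const_mul _)
      fun t ht => abs_Hker_mul_add_Hker_mul_le hψ hX hφ hA hε₀
        (scale_le_sqrt_div_eight hε hβ) ht).trans ?_
    rw [integral_const_mul]
    gcongr
  have hweight : ε ^ 2 / scale ε β ^ 3 ≤ 2 * (ε ^ 2 / (ε ^ 3 + |β| ^ 3)) := by
    rw [mul_div_assoc', div_le_div_iff₀ (by positivity) (by positivity)]
    nlinarith [pow_add_pow_le_two_mul_scale_pow (x := β) hε₀.le 3, sq_nonneg ε]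
  rw [Hstar, abs_mul, abs_of_pos (by positivity)]
  calc _ ≤ (2 * π)⁻¹ * (c * (ε ^ 2 / scale ε β ^ 3) * (3 * π)) := by gcongr
    _ = 3 / 2 * c * (ε ^ 2 / scale ε β ^ 3) := by field_simp
    _ ≤ 3 / 2 * c * (2 * (ε ^ 2 / (ε ^ 3 + |β| ^ 3))) := by gcongr
    _ = _ := by ring

end Kernel

/-! ### The weighted bound -/

lemma abs_integral_mul_le_setIntegral {s : Set ℝ} (hs : MeasurableSet s) {h k w : ℝ → ℝ}
    (hk : ∀ x ∉ s, k x = 0) (hkw : ∀ x ∈ s, |k x| ≤ w x)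
    (hint : IntegrableOn (fun x => |h x| * w x) s) :
    |∫ x, h x * k x| ≤ ∫ x in s, |h x| * w x := by
  have hsupp : ∀ x ∉ s, h x * k x = 0 := fun x hx => by rw [hk x hx, mul_zero]
  rw [← setIntegral_eq_integral_of_forall_compl_eq_zero hsupp, ← Real.norm_eq_abs]
  refine norm_integral_le_of_norm_le hint ((ae_restrict_mem hs).mono fun x hx => ?_)
  rw [Real.norm_eq_abs, abs_mul]
  gcongr
  exact hkw x hx

lemma integrableOn_abs_mul_weight {ε : ℝ} (hε : 0 < ε) {s : Set ℝ} {h : ℝ → ℝ}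
    (hh : IntegrableOn h s) : IntegrableOn (fun x => |h x| * (ε ^ 2 / (ε ^ 3 + |x| ^ 3))) s := by
  refine hh.abs.mul_bdd (c := ε ^ 2 / ε ^ 3)
    (by fun_prop : Measurable _).aestronglyMeasurable (.of_forall fun x => ?_)
  rw [Real.norm_of_nonneg (by positivity)]
  gcongr
  exact le_add_of_nonneg_right (by positivity)

theorem Znorm_le_weighted_L1_general {A : ℝ} (hA : 0 ≤ A) {L : NNReal} {ψ : ℝ → ℝ}
    (hψ : IsLipschitzCutoff L ψ) :
    ∃ C : ℝ, 0 < C ∧ ∀ ε ∈ Ioc (0 : ℝ) (1 / 64), ∀ f g : ℝ → ℝ, IsGapWidth A ε (Xt ε f g) →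
      ∀ h : ℝ → ℝ, IntegrableOn h (Ioo (-(√ε / 8)) (√ε / 8)) →
        ∀ φ : ℝ → ℝ, IsTestFunction ε φ →
          |∫ α, h α * Hstar ψ ε f g φ α| ≤
            C * ∫ β in Ioo (-(√ε / 8)) (√ε / 8), |h β| * (ε ^ 2 / (ε ^ 3 + |β| ^ 3)) := by
  refine ⟨3 * ((40 + 64 * L) * (A + 2) ^ 2), by positivity, fun ε hε f g hX h hh φ hφ => ?_⟩
  rw [← integral_const_mul]
  simp only [mul_left_comm _ |h _|]
  refine abs_integral_mul_le_setIntegral measurableSet_Ioo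
    (fun β hβ => Hstar_eq_zero hψ hε.1 (not_lt.1 fun hlt => hβ (abs_lt.1 hlt)))
    (fun β hβ => abs_Hstar_le hψ hX hφ hA hε (abs_lt.2 hβ).le) ?_
  simp only [← mul_left_comm _ |h _|]
  exact (integrableOn_abs_mul_weight hε.1 hh).const_mul _

/-! ### Smooth cutoffs and the classes `C₂` and `GoodFG` -/

section Hypotheses

variable {δ A ε : ℝ} {f g φ ψ : ℝ → ℝ}

lemma IsCutoff.exists_isLipschitzCutoff (hψ : IsCutoff ψ) : ∃ L, IsLipschitzCutoff L ψ := by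
  obtain ⟨hsmooth, heven, hmem, hzero, -⟩ := hψ
  have hsupp : HasCompactSupport ψ :=
    HasCompactSupport.intro (isCompact_Icc (a := (-1 : ℝ)) (b := 1)) fun x hx =>
      hzero x (not_le.1 fun hle => hx (abs_le.1 hle))
  obtain ⟨L, hL⟩ := hsmooth.lipschitzWith_of_hasCompactSupport hsupp (by simp)
  exact ⟨L, hL, heven, fun x => abs_le.2 ⟨by linarith [(hmem x).1], (hmem x).2⟩, hzero⟩

lemma sqrt_div_four_le_of_le_sq (hδ : 0 ≤ δ) (hε : ε ≤ δ ^ 2) : √ε / 4 ≤ δ := by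
  have : √ε ≤ δ := Real.sqrt_le_iff.2 ⟨hδ, hε⟩
  linarith

lemma InC2.isTestFunction (hφ : InC2 δ ε φ) (hεδ : √ε / 4 ≤ δ) : IsTestFunction ε φ where
  differentiableAt x _ := hφ.1.differentiable one_ne_zero x
  abs_le x hx := (hφ.2.2.2 x (abs_lt.1 (hx.trans_le hεδ))).1
  abs_deriv_le x hx := (hφ.2.2.2 x (abs_lt.1 (hx.trans_le hεδ))).2

lemma GoodFG.abs_derivWithin_add_le (hfg : GoodFG δ A ε f g) {x : ℝ} (hx : x ∈ Ioo (-δ) δ) :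
    |derivWithin f (Ioo (-δ) δ) x + derivWithin g (Ioo (-δ) δ) x| ≤ A * |x| := by
  obtain ⟨hf, hg, -, -, hf'₀, hg'₀, hA, -⟩ := hfg
  have hu : UniqueDiffOn ℝ (Ioo (-δ) δ) := uniqueDiffOn_Ioo _ _
  have hf' := hf.differentiableOn_iteratedDerivWithin (m := 1) (by norm_num) hu
  have hg' := hg.differentiableOn_iteratedDerivWithin (m := 1) (by norm_num) hu
  have h0 : (0 : ℝ) ∈ Ioo (-δ) δ := ⟨by linarith [hx.1, hx.2], by linarith [hx.1, hx.2]⟩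
  have hmvt := Convex.norm_image_sub_le_of_norm_derivWithin_le (C := A) (hf'.add hg')
    (fun z hz => by
      rw [derivWithin_add (hf' z hz) (hg' z hz), ← iteratedDerivWithin_succ,
        ← iteratedDerivWithin_succ]
      exact (norm_add_le _ _).trans (hA z hz 2 (by norm_num)))
    (convex_Ioo _ _) h0 hx
  simpa [iteratedDerivWithin_one, hf'₀, hg'₀] using hmvt

lemma GoodFG.isGapWidth (hfg : GoodFG δ A ε f g) (hεδ : √ε / 4 ≤ δ) :
    IsGapWidth A ε (Xt ε f g) := by
  have hmem : ∀ x, |x| < √ε / 4 → x ∈ Ioo (-δ) δ := fun x hx => abs_lt.1 (hx.trans_le hεδ)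
  have hderiv : ∀ x, |x| < √ε / 4 → HasDerivAt (Xt ε f g)
      (derivWithin f (Ioo (-δ) δ) x + derivWithin g (Ioo (-δ) δ) x) x := fun x hx =>
    ((((hfg.1.differentiableOn (by norm_num) x (hmem x hx)).hasDerivWithinAt.const_add
      (2 * ε)).add
      (hfg.2.1.differentiableOn (by norm_num) x (hmem x hx)).hasDerivWithinAt)).hasDerivAt
      (Ioo_mem_nhds (hmem x hx).1 (hmem x hx).2)
  refine ⟨by simp [Xt, hfg.2.2.1, hfg.2.2.2.1], fun x hx => ?_,
    fun x hx => (hderiv x hx).differentiableAt, fun x hx => ?_⟩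
  · have hx' : x ∈ Ioo (-(4 * √ε)) (4 * √ε) := abs_lt.1 (by linarith [Real.sqrt_nonneg ε])
    have := hfg.2.2.2.2.2.2.2 x hx' x hx'
    unfold Xt
    linarith
  · rw [(hderiv x hx).deriv]
    exact hfg.abs_derivWithin_add_le (hmem x hx)

lemma integrableOn_of_sq_integrableOn {s t : Set ℝ} {h : ℝ → ℝ} (hm : Measurable h)
    (hh : IntegrableOn (fun x => h x ^ 2) t) (hst : s ⊆ t) (hs : volume s ≠ ⊤) :
    IntegrableOn h s := by
  have : Fact (volume s < ⊤) := ⟨hs.lt_top⟩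
  exact ((memLp_two_iff_integrable_sq hm.aestronglyMeasurable).2
    (hh.mono_set hst)).integrable one_le_two

end Hypotheses

/-- **Weighted L¹ bound for the Z-norm (Lemma 3.2(i), estimate (3.11)).**  For every
`h ∈ L²(I_δ)`, one has `‖h‖_Z ≲ ∫_{I_{√ε/8}} |h(β)| ε²/(ε³+|β|³) dβ`, i.e. for every `φ ∈ C₂`,
`|∫ h · H*φ| ≤ C ∫_{I_{√ε/8}} |h(β)| ε²/(ε³+|β|³) dβ` with `C` depending only on `A`, `δ`
(and `ψ`). -/
theorem Znorm_le_weighted_L1 (δ A : ℝ) (hδ : δ ∈ Ioc (0:ℝ) (1/100)) (hA : 1 ≤ A)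
    (ψ : ℝ → ℝ) (hψ : IsCutoff ψ) :
    ∃ C : ℝ, 0 < C ∧
      ∀ ε : ℝ, ε ∈ Ioc (0:ℝ) (δ ^ 2 / 100) →
      ∀ f g : ℝ → ℝ, GoodFG δ A ε f g →
      ∀ h : ℝ → ℝ, Measurable h → IntegrableOn (fun x => h x ^ 2) (Ioo (-δ) δ) →
        ∀ φ : ℝ → ℝ, InC2 δ ε φ →
          |∫ α : ℝ, h α * Hstar ψ ε f g φ α| ≤
            C * ∫ β in Ioo (-(Real.sqrt ε / 8)) (Real.sqrt ε / 8),
              |h β| * (ε ^ 2 / (ε ^ 3 + |β| ^ 3)) := by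
  obtain ⟨L, hL⟩ := hψ.exists_isLipschitzCutoff
  obtain ⟨C, hC, hbound⟩ := Znorm_le_weighted_L1_general (zero_le_one.trans hA) hL
  refine ⟨C, hC, fun ε hε f g hfg h hm hh φ hφ => ?_⟩
  have hεδ : √ε / 4 ≤ δ := sqrt_div_four_le_of_le_sq hδ.1.le (by nlinarith [hε.2])
  have hsub : Ioo (-(√ε / 8)) (√ε / 8) ⊆ Ioo (-δ) δ :=
    Ioo_subset_Ioo (by linarith [Real.sqrt_nonneg ε]) (by linarith [Real.sqrt_nonneg ε])
  exact hbound ε ⟨hε.1, by nlinarith [hε.2, hδ.1, hδ.2]⟩ f g (hfg.isGapWidth hεδ) h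
    (integrableOn_of_sq_integrableOn hm hh hsub measure_Ioo_lt_top.ne) φ (hφ.isTestFunction hεδ)
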